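/- Let 𝓕 be a non-empty quasi-finite family of finite graphs, each having at least one edge. Then for every tree T there is a constant C_T ≥ 0 such that for every finite graph H, either H ∪ kT is 𝓕-saturated for every integer k ≥ C_T, or H ∪ kT is not 𝓕-saturated for any integer k ≥ C_T. -/

import Mathlib

open SimpleGraph Filter Topology

/-- `H` (on `β`) is contained in `G` (on `α`): `G` has a subgraph isomorphic to `H`. -/
def Contains {α β : Type*} (G : SimpleGraph α) (H : SimpleGraph β) : Prop :=
  ∃ f : β ↪ α, ∀ a b : β, H.Adj a b → G.Adj (f a) (f b)

/-- A family of finite graphs, each given on a vertex set `Fin n`. -/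
abbrev GraphFam := Set ((n : ℕ) × SimpleGraph (Fin n))

/-- `G` is `𝓕`-saturated: `G` contains no member of `𝓕`, but adding any missing edge to `G`
creates a member of `𝓕`. -/
def FamSaturated (𝓕 : GraphFam) {α : Type*} (G : SimpleGraph α) : Prop :=
  (∀ F ∈ 𝓕, ¬ Contains G F.2) ∧
    ∀ u v : α, u ≠ v → ¬ G.Adj u v →
      ∃ F ∈ 𝓕, Contains (G ⊔ SimpleGraph.fromEdgeSet {s(u, v)}) F.2

/-- `sat n 𝓕` is the minimum number of edges in an `𝓕`-saturated graph on `n` vertices. -/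
noncomputable def sat (n : ℕ) (𝓕 : GraphFam) : ℕ :=
  sInf {m | ∃ G : SimpleGraph (Fin n), FamSaturated 𝓕 G ∧ Nat.card G.edgeSet = m}

/-- `𝓕` is quasi-finite: for every tree `T` there is a constant `C` such that every graph in `𝓕`
has at most `C` connected components isomorphic to `T`. -/
def QuasiFinite (𝓕 : GraphFam) : Prop :=
  ∀ (t : ℕ) (T : SimpleGraph (Fin t)), T.IsTree →
    ∃ C : ℕ, ∀ F ∈ 𝓕,
      Nat.card {c : F.2.ConnectedComponent // Nonempty (SimpleGraph.induce c.supp F.2 ≃g T)} ≤ C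

/-- `C` is a residue class modulo `r`, viewed as a subset of the non-negative integers. -/
def ResidueClass (r : ℕ) (C : Set ℕ) : Prop := ∃ c < r, C = {n : ℕ | n % r = c}

/-- The disjoint union of two graphs. -/
def disjUnionG {α β : Type*} (G : SimpleGraph α) (H : SimpleGraph β) : SimpleGraph (α ⊕ β) :=
  SimpleGraph.fromRel (fun x y =>
    match x, y with
    | Sum.inl a, Sum.inl b => G.Adj a b
    | Sum.inr a, Sum.inr b => H.Adj a b
    | _, _ => False)

/-- `H ∪ kT`: the disjoint union of `H` with `k` copies of `T`. -/
def unionCopies {α β : Type*} (H : SimpleGraph α) (k : ℕ) (T : SimpleGraph β) :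
    SimpleGraph (α ⊕ Fin k × β) :=
  SimpleGraph.fromRel (fun x y =>
    match x, y with
    | Sum.inl a, Sum.inl b => H.Adj a b
    | Sum.inr (i, a), Sum.inr (j, b) => i = j ∧ T.Adj a b
    | _, _ => False)

/-- Quasi-finiteness bounds the number of components that are trees of bounded order. -/
lemma QuasiFinite.exists_card_smallTree_le {𝓕 : GraphFam} (h : QuasiFinite 𝓕) (t : ℕ) :
    ∃ D : ℕ, ∀ F ∈ 𝓕, Nat.card {c : F.2.ConnectedComponent //
      (SimpleGraph.induce c.supp F.2).IsTree ∧ Nat.card c.supp ≤ t} ≤ D := by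
  classical
  choose C hC using h
  refine ⟨∑ x : (n : Fin (t + 1)) × SimpleGraph (Fin n),
    if hx : x.2.IsTree then C _ x.2 hx else 0, fun F hF => ?_⟩
  rw [Nat.card_eq_fintype_card, Fintype.card_subtype]
  let comps (x : (n : Fin (t + 1)) × SimpleGraph (Fin n)) : Finset F.2.ConnectedComponent :=
    {c | x.2.IsTree ∧ Nonempty (SimpleGraph.induce c.supp F.2 ≃g x.2)}
  calc _ ≤ (Finset.univ.biUnion comps).card := by
        refine Finset.card_le_card fun c hc => ?_
        obtain ⟨hc, hcard⟩ := (Finset.mem_filter.1 hc).2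
        let e := (SimpleGraph.induce c.supp F.2).overFinIso (Nat.card_eq_fintype_card.symm)
        exact Finset.mem_biUnion.2 ⟨⟨⟨_, Nat.lt_succ_of_le hcard⟩, _⟩, Finset.mem_univ _,
          Finset.mem_filter.2 ⟨Finset.mem_univ _, e.isTree_iff.1 hc, ⟨e⟩⟩⟩
    _ ≤ ∑ x, (comps x).card := Finset.card_biUnion_le
    _ ≤ _ := by
        refine Finset.sum_le_sum fun x _ => ?_
        split_ifs with hx
        · refine le_trans (le_of_eq ?_) (hC _ x.2 hx F hF)
          rw [Nat.card_eq_fintype_card, Fintype.card_subtype]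
          simp [comps, hx]
        · simp [comps, hx]

section UnionCopies

variable {α β : Type*} {H : SimpleGraph α} {T : SimpleGraph β} {k l : ℕ}

@[simp] lemma unionCopies_adj_inl_inl {a b : α} :
    (unionCopies H k T).Adj (Sum.inl a) (Sum.inl b) ↔ H.Adj a b := by
  simp only [unionCopies, fromRel_adj, H.adj_comm b a, or_self]
  exact ⟨fun h => h.2, fun h => ⟨by simpa using h.ne, h⟩⟩

@[simp] lemma unionCopies_adj_inr_inr {x y : Fin k × β} :
    (unionCopies H k T).Adj (Sum.inr x) (Sum.inr y) ↔ x.1 = y.1 ∧ T.Adj x.2 y.2 := by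
  obtain ⟨i, a⟩ := x
  obtain ⟨j, b⟩ := y
  simp only [unionCopies, fromRel_adj, T.adj_comm b a, eq_comm (a := j), or_self]
  exact ⟨fun h => h.2, fun h => ⟨by simpa using fun _ => h.2.ne, h⟩⟩

@[simp] lemma not_unionCopies_adj_inl_inr {a : α} {y : Fin k × β} :
    ¬ (unionCopies H k T).Adj (Sum.inl a) (Sum.inr y) := by
  simp [unionCopies]

@[simp] lemma not_unionCopies_adj_inr_inl {a : α} {y : Fin k × β} :
    ¬ (unionCopies H k T).Adj (Sum.inr y) (Sum.inl a) := by
  simp [unionCopies]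

/-- The set of (at most one) indices of the copy in which a vertex of `H ∪ kT` lies. -/
def copyIndex : α ⊕ Fin k × β → Finset (Fin k)
  | Sum.inl _ => ∅
  | Sum.inr x => {x.1}

@[simp] lemma copyIndex_inl (a : α) : copyIndex (Sum.inl a : α ⊕ Fin k × β) = ∅ := rfl

@[simp] lemma copyIndex_inr (x : Fin k × β) :
    copyIndex (Sum.inr x : α ⊕ Fin k × β) = {x.1} := rfl

lemma mem_copyIndex {i : Fin k} {x : α ⊕ Fin k × β} :
    i ∈ copyIndex x ↔ ∃ b, x = Sum.inr (i, b) := by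
  rcases x with a | ⟨j, b⟩ <;> simp [eq_comm]

lemma card_copyIndex_le_one (x : α ⊕ Fin k × β) : (copyIndex x).card ≤ 1 := by
  cases x <;> simp

/-- The map on vertices induced by a map on the indices of the copies. -/
def copyMap (g : Fin k → Fin l) : α ⊕ Fin k × β → α ⊕ Fin l × β :=
  Sum.map id (Prod.map g id)

@[simp] lemma copyMap_inl (g : Fin k → Fin l) (a : α) :
    copyMap g (Sum.inl a : α ⊕ Fin k × β) = Sum.inl a := rfl

@[simp] lemma copyMap_inr (g : Fin k → Fin l) (x : Fin k × β) :
    copyMap g (Sum.inr x : α ⊕ Fin k × β) = Sum.inr (g x.1, x.2) := rfl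

lemma copyMap_congr {g g' : Fin k → Fin l} {x : α ⊕ Fin k × β}
    (h : ∀ i ∈ copyIndex x, g i = g' i) : copyMap g x = copyMap g' x := by
  cases x <;> simp_all

lemma copyMap_copyMap_of_leftInvOn {p : Fin k → Fin l} {q : Fin l → Fin k} {x : α ⊕ Fin k × β}
    (h : ∀ i ∈ copyIndex x, q (p i) = i) : copyMap q (copyMap p x) = x := by
  cases x <;> simp_all

lemma copyIndex_copyMap (g : Fin k → Fin l) (x : α ⊕ Fin k × β) :
    copyIndex (copyMap g x) = (copyIndex x).image g := by
  cases x <;> simp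

lemma unionCopies_adj_copyMap {g : Fin k → Fin l} {x y : α ⊕ Fin k × β}
    (h : (unionCopies H k T).Adj x y) : (unionCopies H l T).Adj (copyMap g x) (copyMap g y) := by
  rcases x with a | ⟨i, a⟩ <;> rcases y with b | ⟨j, b⟩ <;> simp_all

end UnionCopies

/-- An injection defined on part of a finite set extends to the whole of it, if the target is
large enough. -/
lemma exists_injOn_extend {k l : ℕ} {S U : Finset (Fin k)} (hSU : S ⊆ U) (hU : U.card ≤ l)
    (g : Fin k → Fin l) (hg : Set.InjOn g S) :
    ∃ g' : Fin k → Fin l, Set.InjOn g' U ∧ ∀ i ∈ S, g' i = g i := by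
  classical
  obtain ⟨W, hSW, -, hW⟩ := Finset.exists_subsuperset_card_eq (Finset.subset_univ (S.image g))
    (n := U.card) (Finset.card_image_le.trans (Finset.card_le_card hSU)) (by simpa using hU)
  have hmaps : Set.MapsTo (fun i : U => g i) {i : U | (i : Fin k) ∈ S} W :=
    fun i hi => hSW (Finset.mem_image_of_mem g hi)
  have hinj : Set.InjOn (fun i : U => g i) {i : U | (i : Fin k) ∈ S} :=
    fun i hi j hj hij => Subtype.ext (hg hi hj hij)
  obtain ⟨e, he⟩ := hmaps.exists_equiv_extend_of_card_eq (by simpa using hW.symm) hinj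
  refine ⟨fun i => if h : i ∈ U then e ⟨i, h⟩ else g i, fun i hi j hj hij => ?_, fun i hi => ?_⟩
  · simp only [Finset.mem_coe] at hi hj
    simpa [hi, hj, Subtype.coe_inj] using hij
  · simpa [hSU hi] using he ⟨i, hSU hi⟩ hi

/-- If `F` embeds in a graph in which the copies of the acyclic graph `T` with index outside `S`
are components, then the number of these copies met by `F` is at most the number of components of
`F` that are trees with at most `t` vertices. -/
lemma card_copies_met_le {α V : Type*} [Finite V] {t k : ℕ} {T : SimpleGraph (Fin t)}
    (hT : T.IsAcyclic) {G : SimpleGraph (α ⊕ Fin k × Fin t)} {S : Finset (Fin k)}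
    (hG : ∀ i ∉ S, ∀ a y, G.Adj (Sum.inr (i, a)) y → ∃ b, y = Sum.inr (i, b) ∧ T.Adj a b)
    {F : SimpleGraph V} (f : V ↪ α ⊕ Fin k × Fin t)
    (hf : ∀ a b, F.Adj a b → G.Adj (f a) (f b)) :
    Nat.card {i : Fin k // i ∉ S ∧ ∃ x, i ∈ copyIndex (f x)} ≤
      Nat.card {c : F.ConnectedComponent //
        (SimpleGraph.induce c.supp F).IsTree ∧ Nat.card c.supp ≤ t} := by
  have hreach : ∀ i ∉ S, ∀ x y, F.Reachable x y → i ∈ copyIndex (f x) → i ∈ copyIndex (f y) := by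
    rintro i hi x y ⟨w⟩ hx
    induction w with
    | nil => exact hx
    | cons hadj _ ih =>
      obtain ⟨a, ha⟩ := mem_copyIndex.1 hx
      obtain ⟨b, hb, -⟩ := hG i hi a _ (ha ▸ hf _ _ hadj)
      exact ih (mem_copyIndex.2 ⟨b, hb⟩)
  choose x hx using fun i : {i : Fin k // i ∉ S ∧ ∃ x, i ∈ copyIndex (f x)} => i.2.2
  have hcomp : ∀ i, ∀ y : (F.connectedComponentMk (x i)).supp, ∃ b, f y = Sum.inr (i.1, b) :=
    fun i y => mem_copyIndex.1
      (hreach i i.2.1 _ _ (ConnectedComponent.exact y.2).symm (hx i))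
  have htree : ∀ i, (SimpleGraph.induce (F.connectedComponentMk (x i)).supp F).IsTree ∧
      Nat.card (F.connectedComponentMk (x i)).supp ≤ t := by
    intro i
    choose b hb using hcomp i
    have hinj : Function.Injective b := fun y z hyz =>
      Subtype.ext (f.injective (by rw [hb, hb, hyz]))
    let φ : SimpleGraph.induce (F.connectedComponentMk (x i)).supp F →g T :=
      ⟨b, fun {y z} hyz => by
        have hadj := hf _ _ (comap_adj.1 hyz)
        simp only [Function.Embedding.subtype_apply] at hadj
        rw [hb, hb] at hadj
        obtain ⟨c, hc, hadj⟩ := hG i i.2.1 _ _ hadj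
        simp only [Sum.inr.injEq, Prod.mk.injEq, true_and] at hc
        exact hc ▸ hadj⟩
    exact ⟨⟨(F.connectedComponentMk (x i)).connected_toSimpleGraph, hT.comap φ hinj⟩,
      by simpa using Nat.card_le_card_of_injective b hinj⟩
  refine Nat.card_le_card_of_injective (fun i => ⟨F.connectedComponentMk (x i), htree i⟩) ?_
  intro i j hij
  have hmem := hreach i i.2.1 _ _ (ConnectedComponent.exact (congrArg Subtype.val hij)) (hx i)
  obtain ⟨a, ha⟩ := mem_copyIndex.1 hmem
  obtain ⟨b, hb⟩ := mem_copyIndex.1 (hx j)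
  simp only [ha, Sum.inr.injEq, Prod.mk.injEq] at hb
  exact Subtype.ext hb.1

/-- Containment of `F` in `H ∪ kT` plus some edges meeting few copies of `T` transfers to
`H ∪ lT` plus the corresponding edges, if `F` has few components that are small trees. -/
lemma Contains.unionCopies_sup {α V : Type*} [Finite V] {t k l D : ℕ} {T : SimpleGraph (Fin t)}
    (hT : T.IsAcyclic) {H : SimpleGraph α} {F : SimpleGraph V}
    (hF : Nat.card {c : F.ConnectedComponent //
      (SimpleGraph.induce c.supp F).IsTree ∧ Nat.card c.supp ≤ t} ≤ D)
    {S : Finset (Fin k)} (hl : D + S.card ≤ l)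
    {E : SimpleGraph (α ⊕ Fin k × Fin t)} {E' : SimpleGraph (α ⊕ Fin l × Fin t)}
    (hE : ∀ x y, E.Adj x y → copyIndex x ⊆ S)
    (q : Fin k → Fin l) (hq : Set.InjOn q S)
    (hEE' : ∀ x y, E.Adj x y → E'.Adj (copyMap q x) (copyMap q y))
    (h : Contains (unionCopies H k T ⊔ E) F) : Contains (unionCopies H l T ⊔ E') F := by
  classical
  obtain ⟨f, hf⟩ := h
  let M : Finset (Fin k) := {i | i ∉ S ∧ ∃ x, i ∈ copyIndex (f x)}
  have hM : M.card ≤ D := by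
    refine le_trans (le_of_eq ?_) ((card_copies_met_le hT (S := S) ?_ f hf).trans hF)
    · rw [Nat.card_eq_fintype_card, Fintype.card_subtype]
    · rintro i hi a y (h | h)
      · rcases y with y | ⟨j, b⟩ <;> simp_all
      · exact absurd (hE _ _ h (by simp)) hi
  obtain ⟨g, hg, hgq⟩ := exists_injOn_extend (U := M ∪ S) Finset.subset_union_right
    ((Finset.card_union_le _ _).trans (by omega)) q hq
  have hmem : ∀ x, ∀ i ∈ copyIndex (f x), i ∈ M ∪ S := by
    intro x i hi
    by_cases hiS : i ∈ S
    · simp [hiS]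
    · simp only [M, Finset.mem_union, Finset.mem_filter, Finset.mem_univ, true_and]
      exact Or.inl ⟨hiS, x, hi⟩
  refine ⟨⟨fun x => copyMap g (f x), fun x y hxy => f.injective ?_⟩, fun x y hxy => ?_⟩
  · have hx := hmem x
    have hy := hmem y
    dsimp only at hxy
    rcases hfx : f x with a | ⟨i, a⟩ <;> rcases hfy : f y with b | ⟨j, b⟩ <;>
      simp only [hfx, hfy, copyMap_inl, copyMap_inr, Sum.inl.injEq, Sum.inr.injEq, reduceCtorEq,
        Prod.mk.injEq, copyIndex_inr, Finset.mem_singleton, forall_eq] at hxy hx hy ⊢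
    · exact hxy
    · exact ⟨hg hx hy hxy.1, hxy.2⟩
  · rcases hf x y hxy with h | h
    · exact Or.inl (unionCopies_adj_copyMap h)
    · refine Or.inr ?_
      have hgx := copyMap_congr fun i hi => hgq i (hE _ _ h hi)
      have hgy := copyMap_congr fun i hi => hgq i (hE _ _ h.symm hi)
      change E'.Adj (copyMap g (f x)) (copyMap g (f y))
      rw [hgx, hgy]
      exact hEE' _ _ h

/-- Saturation of `H ∪ kT` does not depend on `k` once `k` is large compared with the number of
small tree components of the members of `𝓕`. -/
lemma FamSaturated.unionCopies_of_le {α : Type*} {𝓕 : GraphFam} {t k l D : ℕ}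
    {T : SimpleGraph (Fin t)} (hT : T.IsAcyclic) {H : SimpleGraph α}
    (hD : ∀ F ∈ 𝓕, Nat.card {c : F.2.ConnectedComponent //
      (SimpleGraph.induce c.supp F.2).IsTree ∧ Nat.card c.supp ≤ t} ≤ D)
    (hk : D + 2 ≤ k) (hl : D + 2 ≤ l) (h : FamSaturated 𝓕 (unionCopies H k T)) :
    FamSaturated 𝓕 (unionCopies H l T) := by
  classical
  refine ⟨fun F hF hc => h.1 F hF ?_, fun u v huv hadj => ?_⟩
  · rw [← sup_bot_eq (unionCopies H l T)] at hc
    rw [← sup_bot_eq (unionCopies H k T)]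
    exact hc.unionCopies_sup hT (hD F hF) (S := ∅) (by simp; omega) (by simp)
      (fun _ => ⟨0, by omega⟩) (by simp) (by simp)
  · let S : Finset (Fin l) := copyIndex u ∪ copyIndex v
    have hS : S.card ≤ 2 := (Finset.card_union_le _ _).trans
      (add_le_add (card_copyIndex_le_one u) (card_copyIndex_le_one v))
    obtain ⟨p, hp, -⟩ := exists_injOn_extend (Finset.empty_subset S) (hS.trans (by omega : 2 ≤ k))
      (fun _ => ⟨0, by omega⟩) (by simp)
    have : Nonempty (Fin l) := ⟨⟨0, by omega⟩⟩
    let q := Function.invFunOn p S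
    have hqp : ∀ i ∈ S, q (p i) = i := hp.leftInvOn_invFunOn
    have hu : copyMap q (copyMap p u) = u :=
      copyMap_copyMap_of_leftInvOn fun i hi => hqp i (Finset.mem_union_left _ hi)
    have hv : copyMap q (copyMap p v) = v :=
      copyMap_copyMap_of_leftInvOn fun i hi => hqp i (Finset.mem_union_right _ hi)
    obtain ⟨F, hF, hc⟩ := h.2 (copyMap p u) (copyMap p v)
      (fun e => huv (by rw [← hu, ← hv, e]))
      (fun e => hadj (by simpa only [hu, hv] using unionCopies_adj_copyMap (g := q) e))
    refine ⟨F, hF, hc.unionCopies_sup hT (hD F hF) (S := S.image p) ?_ ?_ q ?_ ?_⟩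
    · have := Finset.card_image_le (s := S) (f := p)
      omega
    · intro x y hxy
      simp only [fromEdgeSet_adj, Set.mem_singleton_iff, Sym2.eq_iff] at hxy
      rcases hxy.1 with ⟨rfl, -⟩ | ⟨rfl, -⟩ <;> rw [copyIndex_copyMap]
      · exact Finset.image_subset_image Finset.subset_union_left
      · exact Finset.image_subset_image Finset.subset_union_right
    · rw [Finset.coe_image]
      rintro _ ⟨i, hi, rfl⟩ _ ⟨j, hj, rfl⟩ hij
      rw [hqp i hi, hqp j hj] at hij
      rw [hij]
    · intro x y hxy
      simp only [fromEdgeSet_adj, Set.mem_singleton_iff, Sym2.eq_iff] at hxy ⊢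
      rcases hxy.1 with ⟨rfl, rfl⟩ | ⟨rfl, rfl⟩
      · simp [hu, hv, huv]
      · simp [hu, hv, huv.symm]

/-- For a quasi-finite family `𝓕` and every tree `T` there is a threshold `C_T` such that for
every graph `H`, either `H ∪ kT` is `𝓕`-saturated for all `k ≥ C_T`, or for no `k ≥ C_T`. -/
theorem stmt16 (𝓕 : GraphFam) (h1 : 𝓕.Nonempty) (h2 : ∀ F ∈ 𝓕, 1 ≤ Nat.card F.2.edgeSet)
    (h3 : QuasiFinite 𝓕) :
    ∀ (t : ℕ) (T : SimpleGraph (Fin t)), T.IsTree →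
      ∃ C : ℕ, ∀ (nH : ℕ) (H : SimpleGraph (Fin nH)),
        (∀ k : ℕ, C ≤ k → FamSaturated 𝓕 (unionCopies H k T)) ∨
        (∀ k : ℕ, C ≤ k → ¬ FamSaturated 𝓕 (unionCopies H k T)) := by
  intro t T hT
  obtain ⟨D, hD⟩ := h3.exists_card_smallTree_le t
  refine ⟨D + 2, fun nH H => ?_⟩
  by_cases h : ∃ k, D + 2 ≤ k ∧ FamSaturated 𝓕 (unionCopies H k T)
  · obtain ⟨k, hk, h⟩ := h
    exact Or.inl fun l hl => h.unionCopies_of_le hT.isAcyclic hD hk hl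
  · exact Or.inr fun k hk hs => h ⟨k, hk, hs⟩
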